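/- With respect to the Poisson bracket defined by the Borisov–Mamaev bivector P̂_g on ℝ⁶ in coordinates (γ, M), the Hamiltonian H = ½(M, A_γ M), with A_γ = A + d (Aγ)(Aγ)ᵀ / g²(γ), and the function M² = (M, M) are in involution: {H, M²}_g = 0. -/

import Mathlib

open Matrix

/-- The `3×3` skew-symmetric matrix `ẑ` of `z ∈ ℝ³`. -/
def hat (z : Fin 3 → ℝ) : Matrix (Fin 3) (Fin 3) ℝ :=
  !![0, z 2, -(z 1); -(z 2), 0, z 0; z 1, -(z 0), 0]

/-- Partial derivative in the coordinate direction `q` on `ℝ^(Fin 2 × Fin 3) ≅ ℝ⁶`. -/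
noncomputable def pd6 (f : ((Fin 2 × Fin 3) → ℝ) → ℝ) (q : Fin 2 × Fin 3)
    (x : (Fin 2 × Fin 3) → ℝ) : ℝ :=
  fderiv ℝ f x (Pi.single q 1)

/-- The γ-part of a point of `ℝ⁶`. -/
def gm (x : (Fin 2 × Fin 3) → ℝ) : Fin 3 → ℝ := fun i => x (0, i)

/-- The M-part of a point of `ℝ⁶`. -/
def mm (x : (Fin 2 × Fin 3) → ℝ) : Fin 3 → ℝ := fun i => x (1, i)

/-- The Chaplygin density `g(γ) = √(1 − d (γ, Aγ))`, `A = diag a`. -/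
noncomputable def gCh (d : ℝ) (a : Fin 3 → ℝ) (γ : Fin 3 → ℝ) : ℝ :=
  Real.sqrt (1 - d * (γ ⬝ᵥ fun i => a i * γ i))

/-- The Borisov–Mamaev Poisson bivector
`P̂_g = g·[[0, Γ̂], [Γ̂, M̂]] − d g⁻¹ (M, Aγ)·[[0,0],[0, Γ̂]]` on `ℝ⁶` with
coordinates `(γ, M)`. -/
noncomputable def Pbm (d : ℝ) (a : Fin 3 → ℝ) (x : (Fin 2 × Fin 3) → ℝ) :
    Matrix (Fin 2 × Fin 3) (Fin 2 × Fin 3) ℝ :=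
  fun p q =>
    if p.1 = 0 then
      (if q.1 = 0 then 0 else gCh d a (gm x) * hat (gm x) p.2 q.2)
    else if q.1 = 0 then gCh d a (gm x) * hat (gm x) p.2 q.2
    else gCh d a (gm x) * hat (mm x) p.2 q.2 -
      d * (gCh d a (gm x))⁻¹ * (mm x ⬝ᵥ fun i => a i * gm x i) * hat (gm x) p.2 q.2

/-- The Chaplygin matrix `A_γ = A + d (Aγ)(Aγ)ᵀ / g²(γ)` with `A = diag a` and
`g²(γ) = 1 − d (γ, Aγ)`. -/
noncomputable def Ag (d : ℝ) (a : Fin 3 → ℝ) (γ : Fin 3 → ℝ) :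
    Matrix (Fin 3) (Fin 3) ℝ :=
  Matrix.diagonal a +
    (d / (1 - d * (γ ⬝ᵥ fun i => a i * γ i))) •
      Matrix.vecMulVec (fun i => a i * γ i) (fun i => a i * γ i)

/-- The Chaplygin ball Hamiltonian `H = ½ (M, A_γ M)` on `ℝ⁶`. -/
noncomputable def Hch (d : ℝ) (a : Fin 3 → ℝ) (x : (Fin 2 × Fin 3) → ℝ) : ℝ :=
  (1 : ℝ) / 2 * (mm x ⬝ᵥ (Ag d a (gm x)).mulVec (mm x))

/-!
Write `g² = 1 - d (γ, Aγ)`, `s = (M, Aγ)` and `σ = d s / g²`. As `∇M² = (0, 2M)` and `M × M = 0`,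
the Hamiltonian vector field of `M²` points along `M × γ` in both blocks, and
`{f, M²}_g = 2 (g ∂_γ f - (d s / g) ∂_M f, M × γ)` for every `f`.

It remains to see that `∂_γ H = σ ∂_M H`, since `g σ = d s / g`. For `d ≠ 0`, `H` is the
stationary value over `σ` of `½ (M + σγ, A (M + σγ)) - σ² / (2d)`, so its differential is obtained
by differentiating with `σ` held fixed, and sees `δγ` and `δM` only through `δM + σ δγ`; direct
differentiation gives the same formula for every `d`.
-/

section ChaplyginForm

variable {𝕜 E V : Type*} [NontriviallyNormedField 𝕜] [NormedAddCommGroup E] [NormedSpace 𝕜 E]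
  [NormedAddCommGroup V] [NormedSpace 𝕜 V]

/-- Twice the Chaplygin Hamiltonian, for an arbitrary bilinear form `B` in place of `(·, A ·)`. -/
def chaplyginForm (B : V →L[𝕜] V →L[𝕜] 𝕜) (d : 𝕜) (γ M : V) : 𝕜 :=
  B M M + d / (1 - d * B γ γ) * B M γ ^ 2

/-- The multiplier `σ = d (M, Aγ) / g²(γ)`, for which `A_γ M = A (M + σγ)`; the form `B` stands for
`(·, A ·)`. -/
def chaplyginMultiplier (B : V →L[𝕜] V →L[𝕜] 𝕜) (d : 𝕜) (γ M : V) : 𝕜 :=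
  d * B M γ / (1 - d * B γ γ)

theorem hasFDerivAt_chaplyginForm {B : V →L[𝕜] V →L[𝕜] 𝕜} (hB : ∀ u v, B u v = B v u) {d : 𝕜}
    {γ M : E → V} {γ' M' : E →L[𝕜] V} {x : E} (hγ : HasFDerivAt γ γ' x) (hM : HasFDerivAt M M' x)
    (hd : 1 - d * B (γ x) (γ x) ≠ 0) :
    HasFDerivAt (fun y => chaplyginForm B d (γ y) (M y))
      ((2 : 𝕜) • (B (M x + chaplyginMultiplier B d (γ x) (M x) • γ x)).comp
        (M' + chaplyginMultiplier B d (γ x) (M x) • γ')) x := by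
  have hMM := B.hasFDerivAt_of_bilinear hM hM
  have hMγ := B.hasFDerivAt_of_bilinear hM hγ
  have hγγ := B.hasFDerivAt_of_bilinear hγ hγ
  have hinv := (hasDerivAt_inv hd).comp_hasFDerivAt x ((hγγ.const_mul d).const_sub 1)
  have hform := hMM.add ((hinv.const_mul d).mul (hMγ.pow 2))
  refine (hform.congr_fderiv ?_).congr_of_eventuallyEq (.of_forall fun y => ?_)
  · ext h
    simp only [chaplyginMultiplier, Function.comp_apply, ContinuousLinearMap.precompR_apply,
      ContinuousLinearMap.precompL_apply, ContinuousLinearMap.compL_apply,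
      ContinuousLinearMap.comp_apply, _root_.add_apply, _root_.smul_apply, map_add, map_smul,
      smul_eq_mul, nsmul_eq_mul, Nat.cast_ofNat, Nat.add_one_sub_one, pow_one, smul_neg, neg_smul,
      neg_neg, hB (M' h), hB (γ' h)]
    field_simp
    ring
  · simp [chaplyginForm, div_eq_mul_inv]

end ChaplyginForm

/-- The bilinear form `(u, S v)` of a square matrix `S`, as a continuous map. -/
noncomputable def matrixForm {ι : Type*} [Fintype ι] [DecidableEq ι] (S : Matrix ι ι ℝ) :
    (ι → ℝ) →L[ℝ] (ι → ℝ) →L[ℝ] ℝ :=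
  (Matrix.toLinearMap₂' ℝ S).toContinuousBilinearMap

section MatrixForm

variable {ι : Type*} [Fintype ι] [DecidableEq ι]

theorem matrixForm_apply (S : Matrix ι ι ℝ) (u v : ι → ℝ) : matrixForm S u v = u ⬝ᵥ S *ᵥ v :=
  Matrix.toLinearMap₂'_apply' S u v

theorem matrixForm_comm {S : Matrix ι ι ℝ} (hS : S.IsSymm) (u v : ι → ℝ) :
    matrixForm S u v = matrixForm S v u := by
  rw [matrixForm_apply, matrixForm_apply, dotProduct_comm, ← vecMul_transpose, hS.eq,
    dotProduct_mulVec]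

theorem matrixForm_one (u v : ι → ℝ) : matrixForm 1 u v = u ⬝ᵥ v := by
  rw [matrixForm_apply, one_mulVec]

theorem matrixForm_diagonal (a u v : ι → ℝ) :
    matrixForm (diagonal a) u v = u ⬝ᵥ fun i => a i * v i := by
  rw [matrixForm_apply]
  exact congrArg _ (funext fun i => mulVec_diagonal a v i)

end MatrixForm

/-- The projection `gm` onto the γ-part, as a continuous linear map. -/
def gmCLM : ((Fin 2 × Fin 3) → ℝ) →L[ℝ] (Fin 3 → ℝ) :=
  .pi fun i => .proj (0, i)

/-- The projection `mm` onto the M-part, as a continuous linear map. -/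
def mmCLM : ((Fin 2 × Fin 3) → ℝ) →L[ℝ] (Fin 3 → ℝ) :=
  .pi fun i => .proj (1, i)

theorem hasFDerivAt_gm (x : (Fin 2 × Fin 3) → ℝ) : HasFDerivAt gm gmCLM x :=
  gmCLM.hasFDerivAt

theorem hasFDerivAt_mm (x : (Fin 2 × Fin 3) → ℝ) : HasFDerivAt mm mmCLM x :=
  mmCLM.hasFDerivAt

theorem gmCLM_single_zero (i : Fin 3) : gmCLM (Pi.single (0, i) 1) = Pi.single i 1 := by
  ext j
  simp [gmCLM, Pi.single_apply]

theorem gmCLM_single_one (i : Fin 3) : gmCLM (Pi.single (1, i) 1) = 0 := by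
  ext j
  simp [gmCLM]

theorem mmCLM_single_zero (i : Fin 3) : mmCLM (Pi.single (0, i) 1) = 0 := by
  ext j
  simp [mmCLM]

theorem mmCLM_single_one (i : Fin 3) : mmCLM (Pi.single (1, i) 1) = Pi.single i 1 := by
  ext j
  simp [mmCLM, Pi.single_apply]

/-- The gradient on `ℝ⁶`; its blocks `∂_γ f` and `∂_M f` are `gm (grad6 f x)` and
`mm (grad6 f x)`. -/
noncomputable def grad6 (f : ((Fin 2 × Fin 3) → ℝ) → ℝ) (x : (Fin 2 × Fin 3) → ℝ) :
    (Fin 2 × Fin 3) → ℝ :=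
  fun q => pd6 f q x

theorem gm_grad6_apply (f : ((Fin 2 × Fin 3) → ℝ) → ℝ) (x : (Fin 2 × Fin 3) → ℝ) (i : Fin 3) :
    gm (grad6 f x) i = pd6 f (0, i) x :=
  rfl

theorem mm_grad6_apply (f : ((Fin 2 × Fin 3) → ℝ) → ℝ) (x : (Fin 2 × Fin 3) → ℝ) (i : Fin 3) :
    mm (grad6 f x) i = pd6 f (1, i) x :=
  rfl

theorem hasFDerivAt_msq (x : (Fin 2 × Fin 3) → ℝ) :
    HasFDerivAt (fun y => ∑ i : Fin 3, mm y i * mm y i)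
      ((2 : ℝ) • (matrixForm 1 (mm x)).comp mmCLM) x := by
  have h := (matrixForm (1 : Matrix (Fin 3) (Fin 3) ℝ)).hasFDerivAt_of_bilinear
    (hasFDerivAt_mm x) (hasFDerivAt_mm x)
  refine (h.congr_fderiv ?_).congr_of_eventuallyEq (.of_forall fun y => ?_)
  · ext v
    simp [matrixForm_comm isSymm_one (mmCLM _), two_mul]
  · simp [matrixForm_one, dotProduct]

theorem gm_grad6_msq (x : (Fin 2 × Fin 3) → ℝ) :
    gm (grad6 (fun y => ∑ i : Fin 3, mm y i * mm y i) x) = 0 := by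
  ext i
  simp [gm_grad6_apply, pd6, (hasFDerivAt_msq x).fderiv, mmCLM_single_zero]

theorem mm_grad6_msq (x : (Fin 2 × Fin 3) → ℝ) :
    mm (grad6 (fun y => ∑ i : Fin 3, mm y i * mm y i) x) = (2 : ℝ) • mm x := by
  ext i
  simp [mm_grad6_apply, pd6, (hasFDerivAt_msq x).fderiv, mmCLM_single_one, matrixForm_one]

theorem Hch_eq_chaplyginForm (d : ℝ) (a : Fin 3 → ℝ) (x : (Fin 2 × Fin 3) → ℝ) :
    Hch d a x = 1 / 2 * chaplyginForm (matrixForm (diagonal a)) d (gm x) (mm x) := by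
  rw [Hch, Ag, add_mulVec, dotProduct_add, ← matrixForm_apply, smul_mulVec, vecMulVec_mulVec,
    dotProduct_smul, op_smul_eq_smul, dotProduct_smul, dotProduct_comm _ (mm x),
    chaplyginForm, matrixForm_diagonal _ (gm x), matrixForm_diagonal _ (mm x) (gm x), sq]
  rfl

theorem hasFDerivAt_Hch {d : ℝ} {a : Fin 3 → ℝ} {x : (Fin 2 × Fin 3) → ℝ}
    (hx : 1 - d * (gm x ⬝ᵥ fun i => a i * gm x i) ≠ 0) :
    HasFDerivAt (Hch d a)
      ((matrixForm (diagonal a)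
          (mm x + chaplyginMultiplier (matrixForm (diagonal a)) d (gm x) (mm x) • gm x)).comp
        (mmCLM + chaplyginMultiplier (matrixForm (diagonal a)) d (gm x) (mm x) • gmCLM)) x := by
  rw [← matrixForm_diagonal] at hx
  have h := (hasFDerivAt_chaplyginForm (matrixForm_comm (isSymm_diagonal a)) (hasFDerivAt_gm x)
    (hasFDerivAt_mm x) hx).const_mul (1 / 2)
  rwa [← funext (Hch_eq_chaplyginForm d a), smul_smul, one_div_mul_cancel two_ne_zero,
    one_smul] at h

theorem gm_grad6_Hch {d : ℝ} {a : Fin 3 → ℝ} {x : (Fin 2 × Fin 3) → ℝ}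
    (hx : 1 - d * (gm x ⬝ᵥ fun i => a i * gm x i) ≠ 0) :
    gm (grad6 (Hch d a) x) =
      chaplyginMultiplier (matrixForm (diagonal a)) d (gm x) (mm x) • mm (grad6 (Hch d a) x) := by
  ext i
  rw [Pi.smul_apply, gm_grad6_apply, mm_grad6_apply, pd6, pd6, (hasFDerivAt_Hch hx).fderiv]
  simp [gmCLM_single_zero, gmCLM_single_one, mmCLM_single_zero, mmCLM_single_one, mul_add]

theorem sum_hat_mul_mul (z u v : Fin 3 → ℝ) :
    ∑ i, ∑ j, hat z i j * u i * v j = u ⬝ᵥ v ⨯₃ z := by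
  simp only [hat, cross_apply, vec3_dotProduct, Fin.sum_univ_three, of_apply, cons_val', cons_val,
    cons_val_zero, cons_val_one, cons_val_fin_one]
  ring

theorem sum_Pbm_mul_mul (d : ℝ) (a : Fin 3 → ℝ) (x u v : (Fin 2 × Fin 3) → ℝ) :
    ∑ p, ∑ q, Pbm d a x p q * u p * v q =
      gCh d a (gm x) *
          (gm u ⬝ᵥ mm v ⨯₃ gm x + mm u ⬝ᵥ gm v ⨯₃ gm x + mm u ⬝ᵥ mm v ⨯₃ mm x) -
        d * (gCh d a (gm x))⁻¹ * (mm x ⬝ᵥ fun i => a i * gm x i) * (mm u ⬝ᵥ mm v ⨯₃ gm x) := by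
  simp only [← sum_hat_mul_mul, Fintype.sum_prod_type, Fin.sum_univ_two]
  simp only [Pbm, gm, mm, ↓reduceIte, one_ne_zero, zero_mul, Finset.sum_const_zero, zero_add,
    sub_mul, mul_add, mul_assoc, Finset.mul_sum, Finset.sum_add_distrib, Finset.sum_sub_distrib]
  ring

theorem sum_Pbm_mul_pd6_msq (d : ℝ) (a : Fin 3 → ℝ) (f : ((Fin 2 × Fin 3) → ℝ) → ℝ)
    (x : (Fin 2 × Fin 3) → ℝ) :
    ∑ p, ∑ q, Pbm d a x p q * pd6 f p x * pd6 (fun y => ∑ i : Fin 3, mm y i * mm y i) q x =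
      2 * ((gCh d a (gm x) • gm (grad6 f x) -
        (d * (gCh d a (gm x))⁻¹ * (mm x ⬝ᵥ fun i => a i * gm x i)) • mm (grad6 f x)) ⬝ᵥ
          mm x ⨯₃ gm x) := by
  have h := sum_Pbm_mul_mul d a x (grad6 f x) (grad6 (fun y => ∑ i : Fin 3, mm y i * mm y i) x)
  rw [gm_grad6_msq, mm_grad6_msq] at h
  refine h.trans ?_
  simp only [map_smul, LinearMap.smul_apply, dotProduct_smul, smul_eq_mul, map_zero,
    LinearMap.zero_apply, dotProduct_zero, cross_self, smul_zero, sub_dotProduct, smul_dotProduct]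
  ring

theorem gCh_mul_chaplyginMultiplier {d : ℝ} {a γ : Fin 3 → ℝ} (M : Fin 3 → ℝ)
    (hγ : 0 < 1 - d * (γ ⬝ᵥ fun i => a i * γ i)) :
    gCh d a γ * chaplyginMultiplier (matrixForm (diagonal a)) d γ M =
      d * (gCh d a γ)⁻¹ * (M ⬝ᵥ fun i => a i * γ i) := by
  have hg : gCh d a γ ≠ 0 := (Real.sqrt_pos.2 hγ).ne'
  have hg_sq : 1 - d * (γ ⬝ᵥ fun i => a i * γ i) = gCh d a γ ^ 2 := (Real.sq_sqrt hγ.le).symm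
  rw [chaplyginMultiplier, matrixForm_diagonal, matrixForm_diagonal, hg_sq]
  field_simp

theorem chaplygin_H_Msq_involution_general (d : ℝ) (a : Fin 3 → ℝ) (x : (Fin 2 × Fin 3) → ℝ)
    (hx : 0 < 1 - d * (gm x ⬝ᵥ fun i => a i * gm x i)) :
    ∑ p, ∑ q, Pbm d a x p q * pd6 (Hch d a) p x *
      pd6 (fun y => ∑ i : Fin 3, mm y i * mm y i) q x = 0 := by
  rw [sum_Pbm_mul_pd6_msq, gm_grad6_Hch hx.ne', smul_smul,
    gCh_mul_chaplyginMultiplier (mm x) hx, sub_self, zero_dotProduct, mul_zero]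

/-- With respect to the Poisson bracket of the Borisov–Mamaev bivector
`P̂_g`, the Hamiltonian `H = ½ (M, A_γ M)` and `M² = (M, M)` are in involution:
`{H, M²}_g = 0` at every point where `1 − d (γ, Aγ) > 0`. -/
theorem chaplygin_H_Msq_involution (d : ℝ) (hd : 0 < d) (a : Fin 3 → ℝ)
    (x : (Fin 2 × Fin 3) → ℝ)
    (hx : 0 < 1 - d * (gm x ⬝ᵥ fun i => a i * gm x i)) :
    ∑ p, ∑ q, Pbm d a x p q * pd6 (Hch d a) p x *
      pd6 (fun y => ∑ i : Fin 3, mm y i * mm y i) q x = 0 := by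
  exact chaplygin_H_Msq_involution_general d a x hx
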